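/- arXiv:2003.05274 — 4 statements merged into one kernel-verified Lean document; each statement's English description precedes it below -/
import Mathlib

section
/- Let P_n = N(0,1)^⊗n and Q_n = N(1,1)^⊗n on ℝⁿ, let M_n(x) = (1/n) Σ_{i=1}^n x_i, and let L_n = dP_n/dQ_n, so that L_n(x) = exp(−n(M_n(x) − 1/2)) for almost every x. Then lim_{n→∞} −(1/n) log P_n(M_n ≥ 1) = 1/2 and lim_{n→∞} −(1/n) log E_{Q_n}[L_n² 1_{M_n ≥ 1}] = 1; in particular the second limit equals twice the first, i.e. Q_n is asymptotically efficient for estimating P_n(M_n ≥ 1). -/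
open MeasureTheory Filter Set Topology
open scoped ENNReal NNReal

/-- A sequence of measures satisfies the large deviation principle with rate function `I`:
upper bound over closed sets and lower bound over open sets, at exponential speed `n`. -/
def SatisfiesLDP {X : Type*} [TopologicalSpace X] [MeasurableSpace X]
    (mu : ℕ → Measure X) (I : X → ℝ≥0∞) : Prop :=
  (∀ F : Set X, IsClosed F →
      limsup (fun n : ℕ => (((n : ℝ)⁻¹ : ℝ) : EReal) * ENNReal.log (mu n F)) atTop
        ≤ -(⨅ x ∈ F, (I x : EReal))) ∧
  (∀ G : Set X, IsOpen G →
      -(⨅ x ∈ G, (I x : EReal)) ≤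
        liminf (fun n : ℕ => (((n : ℝ)⁻¹ : ℝ) : EReal) * ENNReal.log (mu n G)) atTop)

/-- A good rate function: lower semicontinuous with compact sublevel sets. -/
def IsGoodRate {X : Type*} [TopologicalSpace X] (I : X → ℝ≥0∞) : Prop :=
  LowerSemicontinuous I ∧ ∀ c : ℝ≥0∞, c ≠ ⊤ → IsCompact {x | I x ≤ c}

/-- The subdifferential of an extended-real-valued function on ℝ at a point. -/
def Subdiff (f : ℝ → EReal) (x : ℝ) : Set ℝ :=
  {k | ∀ y : ℝ, f x + ((k * (y - x) : ℝ) : EReal) ≤ f y}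

/-- `(1/n) log x` as an extended real number. -/
noncomputable def expRate (n : ℕ) (x : ℝ≥0∞) : EReal :=
  (((n : ℝ)⁻¹ : ℝ) : EReal) * ENNReal.log x

/-- The action `W_n = -(1/n) log (dP/dQ)`. -/
noncomputable def action {Λ : Type*} [MeasurableSpace Λ]
    (P Q : Measure Λ) (n : ℕ) (x : Λ) : ℝ :=
  -(n : ℝ)⁻¹ * Real.log ((P.rnDeriv Q) x).toReal


open ProbabilityTheory

/-!
Let `P = N(μ, v)^{⊗n}` and `Q = N(ν, v)^{⊗n}`. The log-likelihood ratio `ℓ` of `N(μ, v)` against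
`N(ν, v)` is affine, so that of `P` against `Q` is `n ℓ(M)` with `M` the sample mean. When `μ ≤ ν`
the function `ℓ` is antitone, and every moment
`∫_{M ≥ ν} (dP/dQ)^k dQ = ∫_{M ≥ ν} exp(n k ℓ(M)) dQ` is at most `exp(n k ℓ(ν))`.
Conversely, under `Q` the sample mean has law `N(ν, v/n)`, so it lies in the shrinking window
`[ν, ν + √(v/n)]` with a probability independent of `n`, and on that window the integrand is at
least `exp(n k ℓ(ν + √(v/n)))`. Both bounds have exponential rate `k ℓ(ν) = -k (ν - μ)² / (2v)`;
the first moment is `P(M ≥ ν)`.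
-/

section ExponentialRate

lemma expRate_mono (n : ℕ) : Monotone (expRate n) := fun _ _ h ↦
  mul_le_mul_of_nonneg_left (ENNReal.log_le_log h) (mod_cast by positivity)

lemma expRate_mul (n : ℕ) (x y : ℝ≥0∞) : expRate n (x * y) = expRate n x + expRate n y := by
  rw [expRate, ENNReal.log_mul_add,
    EReal.left_distrib_of_nonneg_of_ne_top (mod_cast by positivity) (EReal.coe_ne_top _)]
  rfl

lemma expRate_ofReal_exp {n : ℕ} (hn : n ≠ 0) (r : ℝ) :
    expRate n (ENNReal.ofReal (Real.exp (n * r))) = r := by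
  rw [expRate, ENNReal.log_ofReal_of_pos (Real.exp_pos _), Real.log_exp, ← EReal.coe_mul,
    inv_mul_cancel_left₀ (Nat.cast_ne_zero.mpr hn)]

lemma tendsto_expRate_const {c : ℝ≥0∞} (hc : c ≠ 0) (hc' : c ≠ ⊤) :
    Tendsto (fun n ↦ expRate n c) atTop (𝓝 0) := by
  simp only [expRate, ENNReal.log_pos_real hc hc', ← EReal.coe_mul]
  have real_limit : Tendsto (fun n : ℕ ↦ (n : ℝ)⁻¹ * Real.log c.toReal) atTop (𝓝 0) := by
    simpa using tendsto_inv_atTop_nhds_zero_nat.mul_const (Real.log c.toReal)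
  exact EReal.tendsto_coe.mpr real_limit

theorem tendsto_expRate_of_le_of_le {u : ℕ → ℝ≥0∞} {c : ℝ≥0∞} {r s : ℕ → ℝ} {l : ℝ}
    (hc : c ≠ 0) (hc' : c ≠ ⊤) (hr : Tendsto r atTop (𝓝 l)) (hs : Tendsto s atTop (𝓝 l))
    (hru : ∀ᶠ n : ℕ in atTop, c * ENNReal.ofReal (Real.exp (n * r n)) ≤ u n)
    (hus : ∀ᶠ n : ℕ in atTop, u n ≤ ENNReal.ofReal (Real.exp (n * s n))) :
    Tendsto (fun n ↦ expRate n (u n)) atTop (𝓝 l) := by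
  have lower_limit : Tendsto (fun n ↦ expRate n c + r n) atTop (𝓝 l) := by
    simpa [Function.comp_def] using (EReal.continuousAt_add_coe_coe 0 l).tendsto.comp
      ((tendsto_expRate_const hc hc').prodMk_nhds (EReal.tendsto_coe.mpr hr))
  refine tendsto_of_tendsto_of_tendsto_of_le_of_le' lower_limit (EReal.tendsto_coe.mpr hs) ?_ ?_
  · filter_upwards [hru, eventually_ne_atTop 0] with n hn hn0
    simpa only [expRate_mul, expRate_ofReal_exp hn0] using expRate_mono n hn
  · filter_upwards [hus, eventually_ne_atTop 0] with n hn hn0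
    simpa only [expRate_ofReal_exp hn0] using expRate_mono n hn

end ExponentialRate

section Laplace

lemma setLIntegral_le_of_antitone {Ω : Type*} [MeasurableSpace Ω] {Q : Measure Ω}
    [IsProbabilityMeasure Q] {M : Ω → ℝ} {g : ℝ → ℝ≥0∞} (hM : Measurable M) (hg : Antitone g)
    (a : ℝ) :
    ∫⁻ x in {x | a ≤ M x}, g (M x) ∂Q ≤ g a :=
  calc
    _ ≤ ∫⁻ _ in {x | a ≤ M x}, g a ∂Q :=
      setLIntegral_mono' (measurableSet_le measurable_const hM) fun _ hx ↦ hg hx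
    _ = g a * Q {x | a ≤ M x} := setLIntegral_const _ _
    _ ≤ _ := mul_le_of_le_one_right' prob_le_one

lemma measure_preimage_Icc_mul_le_setLIntegral_of_antitone {Ω : Type*} [MeasurableSpace Ω]
    {Q : Measure Ω} {M : Ω → ℝ} {g : ℝ → ℝ≥0∞} (hM : Measurable M) (hg : Antitone g) (a b : ℝ) :
    Q (M ⁻¹' Icc a b) * g b ≤ ∫⁻ x in {x | a ≤ M x}, g (M x) ∂Q :=
  calc
    _ = ∫⁻ _ in M ⁻¹' Icc a b, g b ∂Q := by rw [setLIntegral_const, mul_comm]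
    _ ≤ ∫⁻ x in M ⁻¹' Icc a b, g (M x) ∂Q :=
      setLIntegral_mono' (hM measurableSet_Icc) fun _ hx ↦ hg hx.2
    _ ≤ _ := lintegral_mono_set fun _ hx ↦ hx.1

theorem tendsto_expRate_setLIntegral_exp {Ω : ℕ → Type*} [∀ n, MeasurableSpace (Ω n)]
    {Q : ∀ n, Measure (Ω n)} [∀ n, IsProbabilityMeasure (Q n)] {M : ∀ n, Ω n → ℝ} {f : ℝ → ℝ}
    {a : ℝ} {b : ℕ → ℝ} {c : ℝ≥0∞} (hM : ∀ n, Measurable (M n)) (hf : Antitone f)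
    (hfa : ContinuousAt f a) (hb : Tendsto b atTop (𝓝 a)) (hc : c ≠ 0)
    (hQ : ∀ᶠ n in atTop, c ≤ Q n (M n ⁻¹' Icc a (b n))) :
    Tendsto (fun n ↦ expRate n
        (∫⁻ x in {x | a ≤ M n x}, ENNReal.ofReal (Real.exp (n * f (M n x))) ∂Q n))
      atTop (𝓝 (f a : ℝ)) := by
  obtain ⟨n, hn⟩ := hQ.exists
  have hc' : c ≠ ⊤ := ne_top_of_le_ne_top (measure_ne_top _ _) hn
  have integrand_antitone (n : ℕ) :
      Antitone fun m ↦ ENNReal.ofReal (Real.exp (n * f m)) := by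
    intro x y hxy
    dsimp only
    grw [hf hxy]
  refine tendsto_expRate_of_le_of_le hc hc' (hfa.tendsto.comp hb) tendsto_const_nhds ?_
    (.of_forall fun n ↦ setLIntegral_le_of_antitone (hM n) (integrand_antitone n) a)
  filter_upwards [hQ] with n hn
  grw [hn]
  exact measure_preimage_Icc_mul_le_setLIntegral_of_antitone (hM n) (integrand_antitone n) a (b n)

end Laplace

section ProductDensity

variable {ι : Type*} [Fintype ι] {α : ι → Type*} {f : ∀ i, α i → ℝ≥0∞}

lemma indicator_univ_pi_prod (s : ∀ i, Set (α i)) (x : ∀ i, α i) :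
    (univ.pi s).indicator (fun x ↦ ∏ i, f i (x i)) x = ∏ i, (s i).indicator (f i) (x i) := by
  classical
  by_cases hx : x ∈ univ.pi s
  · simp_all
  · obtain ⟨i, hi⟩ : ∃ i, x i ∉ s i := by simpa using hx
    rw [indicator_of_notMem hx,
      Finset.prod_eq_zero (Finset.mem_univ i) (indicator_of_notMem hi _)]

variable [∀ i, MeasurableSpace (α i)] (μ : ∀ i, Measure (α i)) [∀ i, IsProbabilityMeasure (μ i)]

lemma lintegral_pi_prod (hf : ∀ i, Measurable (f i)) :
    ∫⁻ x, ∏ i, f i (x i) ∂Measure.pi μ = ∏ i, ∫⁻ y, f i y ∂μ i := by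
  rw [lintegral_prod_eq_prod_lintegral_of_indepFun Finset.univ (fun i (x : ∀ i, α i) ↦ f i (x i))
    (iIndepFun_pi fun i ↦ (hf i).aemeasurable) fun i ↦ (hf i).comp (measurable_pi_apply i)]
  exact Finset.prod_congr rfl fun i _ ↦ (measurePreserving_eval μ i).lintegral_comp (hf i)

theorem pi_withDensity (hf : ∀ i, Measurable (f i))
    [∀ i, SigmaFinite ((μ i).withDensity (f i))] :
    Measure.pi (fun i ↦ (μ i).withDensity (f i)) =
      (Measure.pi μ).withDensity fun x ↦ ∏ i, f i (x i) := by
  refine Measure.pi_eq fun s hs ↦ ?_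
  rw [withDensity_apply _ (.univ_pi hs), ← lintegral_indicator (.univ_pi hs)]
  simp_rw [indicator_univ_pi_prod]
  rw [lintegral_pi_prod μ fun i ↦ (hf i).indicator (hs i)]
  refine Finset.prod_congr rfl fun i _ ↦ ?_
  rw [lintegral_indicator (hs i), withDensity_apply _ (hs i)]

end ProductDensity

section SampleMean

/-- The sample mean `M_n(x) = (x₁ + ⋯ + xₙ) / n`, which is `0` when `n = 0`. -/
noncomputable def sampleMean {n : ℕ} (x : Fin n → ℝ) : ℝ :=
  (n : ℝ)⁻¹ * ∑ i, x i

/-- The product measure `N(μ, v)^{⊗n}`: the joint law of `n` independent Gaussian samples. -/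
noncomputable abbrev iidGaussian (n : ℕ) (μ : ℝ) (v : ℝ≥0) : Measure (Fin n → ℝ) :=
  Measure.pi fun _ ↦ gaussianReal μ v

lemma measurable_sampleMean {n : ℕ} : Measurable (sampleMean (n := n)) := by
  unfold sampleMean
  fun_prop

lemma sum_eq_natCast_mul_sampleMean {n : ℕ} (x : Fin n → ℝ) : ∑ i, x i = n * sampleMean x := by
  rcases eq_or_ne n 0 with rfl | hn
  · simp
  · rw [sampleMean, mul_inv_cancel_left₀ (Nat.cast_ne_zero.mpr hn)]

lemma hasLaw_sum_gaussianReal_of_iIndepFun {Ω ι : Type*} [MeasurableSpace Ω] {P : Measure Ω}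
    {X : ι → Ω → ℝ} {m : ι → ℝ} {v : ι → ℝ≥0} (hX : iIndepFun X P)
    (hXm : ∀ i, Measurable (X i)) (law : ∀ i, HasLaw (X i) (gaussianReal (m i) (v i)) P)
    (s : Finset ι) :
    HasLaw (∑ i ∈ s, X i) (gaussianReal (∑ i ∈ s, m i) (∑ i ∈ s, v i)) P := by
  have : IsProbabilityMeasure P := hX.isProbabilityMeasure
  refine ⟨by fun_prop, ?_⟩
  induction s using Finset.cons_induction with
  | empty => simpa using (hasLaw_dirac_of_ae_eq (P := P) (X := 0) (x := (0 : ℝ)) .rfl).map_eq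
  | cons j s hj ih =>
    simpa only [Finset.sum_cons] using gaussianReal_add_gaussianReal_of_indepFun
      (hX.indepFun_finsetSum_of_notMem hXm hj).symm (law j).map_eq ih

theorem hasLaw_sampleMean_iidGaussian {n : ℕ} (hn : n ≠ 0) (μ : ℝ) (v : ℝ≥0) :
    HasLaw sampleMean (gaussianReal μ (v / n)) (iidGaussian n μ v) := by
  have sum_law := hasLaw_sum_gaussianReal_of_iIndepFun (P := iidGaussian n μ v)
    (X := fun i x ↦ x i) (m := fun _ ↦ μ) (v := fun _ ↦ v)
    (iIndepFun_pi (X := fun _ ↦ id) fun _ ↦ aemeasurable_id) measurable_pi_apply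
    (fun i ↦ (measurePreserving_eval (fun _ ↦ gaussianReal μ v) i).hasLaw) Finset.univ
  convert! gaussianReal_const_mul sum_law (n : ℝ)⁻¹ using 1
  · ext x
    simp [sampleMean]
  · congr 1
    · simp [hn]
    · ext
      simp only [NNReal.coe_div, NNReal.coe_natCast, inv_pow, Finset.sum_const, Finset.card_univ,
        Fintype.card_fin, nsmul_eq_mul, NNReal.coe_mul, NNReal.coe_mk]
      field_simp

lemma gaussianReal_Icc_mean_add_sqrt (m : ℝ) {w : ℝ≥0} (hw : w ≠ 0) :
    gaussianReal m w (Icc m (m + √w)) = gaussianReal 0 1 (Icc 0 1) := by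
  have sqrt_pos : 0 < √(w : ℝ) := Real.sqrt_pos.mpr (by positivity)
  have law : HasLaw (fun x ↦ m + √w * x) (gaussianReal m w) (gaussianReal 0 1) := by
    convert! gaussianReal_const_add (gaussianReal_const_mul HasLaw.id √w) m using 2
    · simp
    · ext
      simp
  rw [← law.map_eq, Measure.map_apply (by fun_prop) measurableSet_Icc]
  congr 1
  ext x
  simp [sqrt_pos]

lemma gaussianReal_Icc_ne_zero (m : ℝ) {w : ℝ≥0} (hw : w ≠ 0) {a b : ℝ} (hab : a < b) :
    gaussianReal m w (Icc a b) ≠ 0 := by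
  refine mt (fun h ↦ gaussianReal_absolutelyContinuous' m hw h) ?_
  simpa using hab

lemma iidGaussian_sampleMean_preimage_Icc {n : ℕ} (hn : n ≠ 0) (μ : ℝ) {v : ℝ≥0} (hv : v ≠ 0) :
    iidGaussian n μ v (sampleMean ⁻¹' Icc μ (μ + √(v / n))) = gaussianReal 0 1 (Icc 0 1) := by
  rw [← Measure.map_apply measurable_sampleMean measurableSet_Icc,
    (hasLaw_sampleMean_iidGaussian hn μ v).map_eq,
    ← gaussianReal_Icc_mean_add_sqrt μ (w := v / n) (by positivity)]
  simp

end SampleMean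

section LikelihoodRatio

/-- The log-likelihood ratio `log (dN(μ, v) / dN(ν, v))`, for `v ≠ 0`, after the quadratic terms
of the two Gaussian exponents have cancelled. -/
noncomputable def gaussianLogRatio (μ ν : ℝ) (v : ℝ≥0) (x : ℝ) : ℝ :=
  -((ν - μ) / v * (x - (μ + ν) / 2))

variable {μ ν : ℝ} {v : ℝ≥0}

lemma continuous_gaussianLogRatio : Continuous (gaussianLogRatio μ ν v) := by
  unfold gaussianLogRatio
  fun_prop

lemma antitone_gaussianLogRatio (hμν : μ ≤ ν) : Antitone (gaussianLogRatio μ ν v) := by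
  intro x y hxy
  have : 0 ≤ ν - μ := sub_nonneg.mpr hμν
  unfold gaussianLogRatio
  gcongr

lemma gaussianLogRatio_right : gaussianLogRatio μ ν v ν = -((ν - μ) ^ 2 / (2 * v)) := by
  unfold gaussianLogRatio
  ring

lemma sum_gaussianLogRatio {n : ℕ} (x : Fin n → ℝ) :
    ∑ i, gaussianLogRatio μ ν v (x i) = n * gaussianLogRatio μ ν v (sampleMean x) := by
  simp only [gaussianLogRatio, Finset.sum_neg_distrib, ← Finset.mul_sum, Finset.sum_sub_distrib,
    sum_eq_natCast_mul_sampleMean, Finset.sum_const, Finset.card_univ, Fintype.card_fin,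
    nsmul_eq_mul]
  ring

lemma gaussianPDFReal_mul_exp_gaussianLogRatio (hv : v ≠ 0) (x : ℝ) :
    gaussianPDFReal ν v x * Real.exp (gaussianLogRatio μ ν v x) = gaussianPDFReal μ v x := by
  rw [gaussianPDFReal, gaussianPDFReal, mul_assoc, ← Real.exp_add, gaussianLogRatio]
  congr 2
  field_simp
  ring

lemma gaussianReal_eq_withDensity_gaussianReal (μ ν : ℝ) (hv : v ≠ 0) :
    gaussianReal μ v = (gaussianReal ν v).withDensity
      fun x ↦ ENNReal.ofReal (Real.exp (gaussianLogRatio μ ν v x)) := by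
  have := continuous_gaussianLogRatio (μ := μ) (ν := ν) (v := v)
  rw [gaussianReal_of_var_ne_zero μ hv, gaussianReal_of_var_ne_zero ν hv,
    ← withDensity_mul _ (measurable_gaussianPDF _ _) (by fun_prop)]
  congr 1
  ext x
  rw [Pi.mul_apply, gaussianPDF, gaussianPDF, ← ENNReal.ofReal_mul (gaussianPDFReal_nonneg _ _ _),
    gaussianPDFReal_mul_exp_gaussianLogRatio hv]

theorem iidGaussian_eq_withDensity_iidGaussian (n : ℕ) (μ ν : ℝ) (hv : v ≠ 0) :
    iidGaussian n μ v = (iidGaussian n ν v).withDensity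
      fun x ↦ ENNReal.ofReal (Real.exp (n * gaussianLogRatio μ ν v (sampleMean x))) := by
  have := continuous_gaussianLogRatio (μ := μ) (ν := ν) (v := v)
  simp only [iidGaussian, gaussianReal_eq_withDensity_gaussianReal μ ν hv]
  rw [pi_withDensity _ fun _ ↦ by fun_prop]
  congr with x
  rw [← ENNReal.ofReal_prod_of_nonneg fun _ _ ↦ (Real.exp_pos _).le, ← Real.exp_sum,
    sum_gaussianLogRatio]

theorem rnDeriv_iidGaussian_ae_eq (n : ℕ) (μ ν : ℝ) (hv : v ≠ 0) :
    (iidGaussian n μ v).rnDeriv (iidGaussian n ν v) =ᵐ[iidGaussian n ν v]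
      fun x ↦ ENNReal.ofReal (Real.exp (n * gaussianLogRatio μ ν v (sampleMean x))) := by
  have := (continuous_gaussianLogRatio (μ := μ) (ν := ν) (v := v)).measurable.comp
    (measurable_sampleMean (n := n))
  rw [iidGaussian_eq_withDensity_iidGaussian n μ ν hv]
  exact Measure.rnDeriv_withDensity _ (by fun_prop)

lemma iidGaussian_absolutelyContinuous (n : ℕ) (μ ν : ℝ) (hv : v ≠ 0) :
    iidGaussian n μ v ≪ iidGaussian n ν v := by
  rw [iidGaussian_eq_withDensity_iidGaussian n μ ν hv]
  exact withDensity_absolutelyContinuous _ _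

theorem tendsto_expRate_setLIntegral_rnDeriv_iidGaussian_pow (hv : v ≠ 0) (hμν : μ ≤ ν) (k : ℕ) :
    Tendsto (fun n ↦ expRate n (∫⁻ x in {x | ν ≤ sampleMean x},
        (iidGaussian n μ v).rnDeriv (iidGaussian n ν v) x ^ k ∂iidGaussian n ν v))
      atTop (𝓝 ((k * gaussianLogRatio μ ν v ν : ℝ) : EReal)) := by
  have moment_eq (n : ℕ) :
      ∫⁻ x in {x | ν ≤ sampleMean x},
        (iidGaussian n μ v).rnDeriv (iidGaussian n ν v) x ^ k ∂iidGaussian n ν v =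
      ∫⁻ x in {x | ν ≤ sampleMean x},
        ENNReal.ofReal (Real.exp (n * (k * gaussianLogRatio μ ν v (sampleMean x))))
        ∂iidGaussian n ν v := by
    refine lintegral_congr_ae (ae_restrict_of_ae ?_)
    filter_upwards [rnDeriv_iidGaussian_ae_eq n μ ν hv] with x hx
    rw [hx, ← ENNReal.ofReal_pow (Real.exp_pos _).le, ← Real.exp_nat_mul, mul_left_comm]
  have window_tendsto : Tendsto (fun n : ℕ ↦ ν + √(v / n)) atTop (𝓝 ν) := by
    simpa using (tendsto_const_div_atTop_nhds_zero_nat (v : ℝ)).sqrt.const_add ν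
  simp_rw [moment_eq]
  refine tendsto_expRate_setLIntegral_exp (f := fun m ↦ k * gaussianLogRatio μ ν v m)
    (fun n ↦ measurable_sampleMean) ((antitone_gaussianLogRatio hμν).const_mul k.cast_nonneg)
    (continuous_gaussianLogRatio.const_mul _).continuousAt window_tendsto
    (gaussianReal_Icc_ne_zero 0 one_ne_zero zero_lt_one) ?_
  filter_upwards [eventually_ne_atTop 0] with n hn
  exact (iidGaussian_sampleMean_preimage_Icc hn ν hv).ge

end LikelihoodRatio

theorem gaussian_shift_efficiency_general {μ ν : ℝ} {v : ℝ≥0} (hv : v ≠ 0) (hμν : μ ≤ ν) :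
    (∀ n : ℕ, ∀ᵐ x ∂iidGaussian n ν v,
        (iidGaussian n μ v).rnDeriv (iidGaussian n ν v) x =
          ENNReal.ofReal (Real.exp (n * gaussianLogRatio μ ν v (sampleMean x)))) ∧
    Tendsto (fun n ↦ -expRate n (iidGaussian n μ v {x | ν ≤ sampleMean x})) atTop
      (𝓝 (((ν - μ) ^ 2 / (2 * v) : ℝ) : EReal)) ∧
    Tendsto (fun n ↦ -expRate n (∫⁻ x in {x | ν ≤ sampleMean x},
        (iidGaussian n μ v).rnDeriv (iidGaussian n ν v) x ^ 2 ∂iidGaussian n ν v)) atTop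
      (𝓝 ((2 * ((ν - μ) ^ 2 / (2 * v)) : ℝ) : EReal)) := by
  have moment_rate (k : ℕ) := (tendsto_expRate_setLIntegral_rnDeriv_iidGaussian_pow hv hμν k).neg
  simp only [gaussianLogRatio_right, ← EReal.coe_neg, mul_neg, neg_neg] at moment_rate
  refine ⟨fun n ↦ rnDeriv_iidGaussian_ae_eq n μ ν hv, ?_, mod_cast moment_rate 2⟩
  simpa [Measure.setLIntegral_rnDeriv (iidGaussian_absolutelyContinuous _ μ ν hv)]
    using moment_rate 1

/-- For `P_n = N(0,1)^{⊗n}`, `Q_n = N(1,1)^{⊗n}` and the sample mean `M_n`: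
`L_n = exp(-n(M_n - 1/2))` a.e., `-(1/n) log P_n(M_n ≥ 1) → 1/2` and
`-(1/n) log E_Q[L_n² 1_(M_n ≥ 1)] → 1 = 2·(1/2)`, i.e. `Q_n` is asymptotically efficient. -/
theorem gaussian_shift_efficiency :
    (∀ n : ℕ, ∀ᵐ x ∂(Measure.pi fun _ : Fin n => gaussianReal 1 1),
        (Measure.pi fun _ : Fin n => gaussianReal 0 1).rnDeriv
            (Measure.pi fun _ : Fin n => gaussianReal 1 1) x =
          ENNReal.ofReal (Real.exp (-(n : ℝ) * ((n : ℝ)⁻¹ * ∑ i, x i - 1 / 2)))) ∧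
    Tendsto (fun n : ℕ => -expRate n
        ((Measure.pi fun _ : Fin n => gaussianReal 0 1)
          {x : Fin n → ℝ | 1 ≤ (n : ℝ)⁻¹ * ∑ i, x i})) atTop
      (𝓝 (((1 : ℝ) / 2 : ℝ) : EReal)) ∧
    Tendsto (fun n : ℕ => -expRate n
        (∫⁻ x in {x : Fin n → ℝ | 1 ≤ (n : ℝ)⁻¹ * ∑ i, x i},
          ((Measure.pi fun _ : Fin n => gaussianReal 0 1).rnDeriv
            (Measure.pi fun _ : Fin n => gaussianReal 1 1) x) ^ 2
          ∂(Measure.pi fun _ : Fin n => gaussianReal 1 1))) atTop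
      (𝓝 ((1 : ℝ) : EReal)) := by
  simpa [iidGaussian, gaussianLogRatio, sampleMean, -neg_sub] using
    gaussian_shift_efficiency_general (v := 1) one_ne_zero zero_le_one
end

section
/- Let μ ∈ ℝ, σ > 0, and define λ(k,γ) = (k²σ²/2 + μ(γμ + k))/(1 − 2γσ²) − (1/2) log(1 − 2γσ²) for 2γσ² < 1 and λ(k,γ) = +∞ otherwise. Then for every (m, c) ∈ ℝ² with m² < c, sup_{(k,γ)∈ℝ²} { k m + γ c − λ(k,γ) } = ( σ² log(σ²/(c − m²)) + c + μ² − 2μm − σ² ) / (2σ²). -/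
open MeasureTheory Filter Set Topology
open scoped ENNReal NNReal

/-!
For `(k, γ)` in the domain of `λ`, `exp (k x + γ x² - λ(k, γ))` is the density with respect to
`N(μ, s)` of another Gaussian law, the tilted one. Integrating its logarithm against `N(m, v)` gives
`KL(N(m, v) ‖ N(μ, s)) - (k m + γ (m² + v) - λ(k, γ)) = KL(N(m, v) ‖ tilted Gaussian)`.
The right-hand side is nonnegative and vanishes when the tilted Gaussian is `N(m, v)`; as `N(μ, s)`
can be tilted to any nondegenerate Gaussian, the supremum is `KL(N(m, c - m²) ‖ N(μ, s))`.
-/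

/-- Closed form of the relative entropy `KL(N(m, v) ‖ N(μ, s))` between Gaussian laws on `ℝ` with
means `m`, `μ` and variances `v`, `s`; it is meaningful for `0 < v` and `0 < s`. -/
noncomputable def gaussianKL (m v μ s : ℝ) : ℝ :=
  (m - μ) ^ 2 / (2 * s) + (v / s - 1 - Real.log (v / s)) / 2

theorem gaussianKL_nonneg {v s : ℝ} (hv : 0 < v) (hs : 0 < s) (m μ : ℝ) :
    0 ≤ gaussianKL m v μ s := by
  have hlog : Real.log (v / s) ≤ v / s - 1 := Real.log_le_sub_one_of_pos (div_pos hv hs)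
  have hmean : 0 ≤ (m - μ) ^ 2 / (2 * s) := by positivity
  unfold gaussianKL
  linarith

theorem gaussianKL_self {v : ℝ} (hv : v ≠ 0) (m : ℝ) : gaussianKL m v m v = 0 := by
  simp [gaussianKL, hv]

theorem gaussianKL_sub_sq {s : ℝ} (hs : s ≠ 0) (m c μ : ℝ) :
    gaussianKL m (c - m ^ 2) μ s =
      (s * Real.log (s / (c - m ^ 2)) + c + μ ^ 2 - 2 * μ * m - s) / (2 * s) := by
  have hlog : Real.log ((c - m ^ 2) / s) = -Real.log (s / (c - m ^ 2)) := by
    rw [← Real.log_inv, inv_div]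
  rw [gaussianKL, hlog]
  field_simp
  ring

/-- The mean of `N(μ, s)` exponentially tilted by `x ↦ k * x + γ * x ^ 2`, for `2 * γ * s < 1`. -/
noncomputable def gaussianTiltedMean (μ s k γ : ℝ) : ℝ := (μ + k * s) / (1 - 2 * γ * s)

/-- The variance of `N(μ, s)` exponentially tilted by `x ↦ k * x + γ * x ^ 2`, for
`2 * γ * s < 1`; it depends neither on `μ` nor on `k`. -/
noncomputable def gaussianTiltedVar (s γ : ℝ) : ℝ := s / (1 - 2 * γ * s)

theorem gaussianTiltedVar_pos {s γ : ℝ} (hs : 0 < s) (hγ : 2 * γ * s < 1) :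
    0 < gaussianTiltedVar s γ :=
  div_pos hs (sub_pos.2 hγ)

theorem exists_gaussianTilted_eq {s v : ℝ} (hs : 0 < s) (hv : 0 < v) (μ m : ℝ) :
    ∃ k γ : ℝ, 2 * γ * s < 1 ∧ gaussianTiltedMean μ s k γ = m ∧ gaussianTiltedVar s γ = v := by
  have hdenom : 1 - 2 * ((1 / s - 1 / v) / 2) * s = s / v := by
    field_simp
    ring
  refine ⟨m / v - μ / s, (1 / s - 1 / v) / 2, ?_, ?_, ?_⟩
  · exact sub_pos.1 (hdenom ▸ div_pos hs hv)
  · rw [gaussianTiltedMean, hdenom]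
    field_simp
    ring
  · rw [gaussianTiltedVar, hdenom, div_div_cancel₀ hs.ne']

/-- The joint cumulant generating function `log 𝔼[exp (k X + γ X²)]` of `(X, X²)` for
`X ~ N(μ, s)`, on its effective domain `2 * γ * s < 1`. -/
noncomputable def gaussianJointCGF (μ s k γ : ℝ) : ℝ :=
  (k ^ 2 * s / 2 + μ * (γ * μ + k)) / (1 - 2 * γ * s) - (1 / 2) * Real.log (1 - 2 * γ * s)

/-- The objective `k m + γ c - λ(k, γ)` of the Legendre–Fenchel transform at `(m, c)`, where `λ`
is `gaussianJointCGF` on its effective domain and `⊤` off it. -/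
noncomputable def gaussianLegendreObjective (μ s m c : ℝ) (p : ℝ × ℝ) : EReal :=
  ((p.1 * m + p.2 * c : ℝ) : EReal) -
    if 2 * p.2 * s < 1 then (gaussianJointCGF μ s p.1 p.2 : EReal) else ⊤

theorem gaussianJointCGF_add_gaussianKL {s v γ : ℝ} (hs : 0 < s) (hv : 0 < v)
    (hγ : 2 * γ * s < 1) (μ m k : ℝ) :
    gaussianJointCGF μ s k γ + gaussianKL m v μ s =
      k * m + γ * (m ^ 2 + v) +
        gaussianKL m v (gaussianTiltedMean μ s k γ) (gaussianTiltedVar s γ) := by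
  obtain ⟨t, ht⟩ : ∃ t, t = 1 - 2 * γ * s := ⟨_, rfl⟩
  have ht_ne : t ≠ 0 := ht ▸ (sub_pos.2 hγ).ne'
  have hγ_eq : γ = (1 - t) / (2 * s) := by
    rw [eq_div_iff (by positivity)]
    linarith
  have hlog : Real.log (v / (s / t)) = Real.log (v / s) + Real.log t := by
    rw [← Real.log_mul (div_pos hv hs).ne' ht_ne, div_div_eq_mul_div, div_mul_eq_mul_div]
  simp only [gaussianJointCGF, gaussianKL, gaussianTiltedMean, gaussianTiltedVar, ← ht, hlog]
  rw [hγ_eq]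
  field_simp
  ring

theorem gaussianLegendreObjective_eq_gaussianKL_sub {s v γ : ℝ} (hs : 0 < s) (hv : 0 < v)
    (hγ : 2 * γ * s < 1) (μ m k : ℝ) :
    gaussianLegendreObjective μ s m (m ^ 2 + v) (k, γ) =
      ((gaussianKL m v μ s -
        gaussianKL m v (gaussianTiltedMean μ s k γ) (gaussianTiltedVar s γ) : ℝ) : EReal) := by
  rw [gaussianLegendreObjective, if_pos hγ, ← EReal.coe_sub, EReal.coe_eq_coe_iff]
  linarith [gaussianJointCGF_add_gaussianKL hs hv hγ μ m k]

theorem isGreatest_range_gaussianLegendreObjective {s v : ℝ} (hs : 0 < s) (hv : 0 < v)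
    (μ m : ℝ) :
    IsGreatest (range (gaussianLegendreObjective μ s m (m ^ 2 + v)))
      (gaussianKL m v μ s : EReal) := by
  refine ⟨?attained, ?upperBound⟩
  case attained =>
    obtain ⟨k, γ, hγ, hmean, hvar⟩ := exists_gaussianTilted_eq hs hv μ m
    refine ⟨(k, γ), ?_⟩
    rw [gaussianLegendreObjective_eq_gaussianKL_sub hs hv hγ, hmean, hvar,
      gaussianKL_self hv.ne', sub_zero]
  case upperBound =>
    rintro _ ⟨⟨k, γ⟩, rfl⟩
    by_cases hγ : 2 * γ * s < 1
    · rw [gaussianLegendreObjective_eq_gaussianKL_sub hs hv hγ, EReal.coe_le_coe_iff]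
      exact sub_le_self _ (gaussianKL_nonneg hv (gaussianTiltedVar_pos hs hγ) _ _)
    · simp [gaussianLegendreObjective, hγ]

/-- Legendre–Fenchel transform of the joint SCGF of `(X, X²)` for `X ~ N(μ, σ²)`:
for `m² < c`, `sup_(k,γ) (km + γc - λ(k,γ))` equals the joint rate function
`(σ² log(σ²/(c - m²)) + c + μ² - 2μm - σ²)/(2σ²)`. -/
theorem gaussian_joint_rate_function (μ σ : ℝ) (hσ : 0 < σ) (m c : ℝ) (h : m ^ 2 < c) :
    (⨆ p : ℝ × ℝ,
        (((p.1 * m + p.2 * c : ℝ)) : EReal) -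
          (if 2 * p.2 * σ ^ 2 < 1 then
            (((p.1 ^ 2 * σ ^ 2 / 2 + μ * (p.2 * μ + p.1)) / (1 - 2 * p.2 * σ ^ 2)
              - (1 / 2) * Real.log (1 - 2 * p.2 * σ ^ 2) : ℝ) : EReal)
          else (⊤ : EReal))) =
      (((σ ^ 2 * Real.log (σ ^ 2 / (c - m ^ 2)) + c + μ ^ 2 - 2 * μ * m - σ ^ 2)
        / (2 * σ ^ 2) : ℝ) : EReal) := by
  have hmax := isGreatest_range_gaussianLegendreObjective (sq_pos_of_pos hσ) (sub_pos.2 h) μ m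
  rw [add_sub_cancel, gaussianKL_sub_sq (pow_ne_zero 2 hσ.ne')] at hmax
  exact hmax.isLUB.iSup_eq
end

section
/- Let X₁, X₂, … be i.i.d. random variables with the exponential distribution of parameter 1 (density e^{−x} on [0,∞)), and let M_n = (1/n) Σ_{i=1}^n X_i. Then for every b > 1, lim_{n→∞} −(1/n) log P(M_n ≥ b) = b − 1 − log b. -/
open MeasureTheory Filter Set Topology
open scoped ENNReal NNReal

open ProbabilityTheory

instance : IsProbabilityMeasure (expMeasure 1) := isProbabilityMeasure_expMeasure one_pos

/-!
The tail of a sum of `n` independent `Exp(r)` variables is the Erlang tail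
`P(S_n ≥ t) = exp (-r t) * ∑_{k < n} (r t) ^ k / k!`, obtained by conditioning on the first
variable. At `t = n b`, with `c = r b ≥ 1`, the partial exponential sum is at most `c ^ n * exp n`
and at least its last term `(n c) ^ (n - 1) / (n - 1)!`. By Stirling's formula both bounds grow at
the exponential rate `1 + log c`, so the tail decays at the rate `c - 1 - log c`.
-/

section SumTail

variable {μ : Measure ℝ}

/-- The tail `t ↦ P(X₁ + ⋯ + Xₙ ≥ t)` of a sum of `n` independent variables of law `μ`. -/
noncomputable def sumTail (μ : Measure ℝ) (n : ℕ) (t : ℝ) : ℝ≥0∞ :=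
  (Measure.pi fun _ : Fin n => μ) {x : Fin n → ℝ | t ≤ ∑ i, x i}

lemma sumTail_antitone (μ : Measure ℝ) (n : ℕ) : Antitone (sumTail μ n) :=
  fun _ _ hst => measure_mono fun _ hx => hst.trans hx

lemma sumTail_zero_of_pos {t : ℝ} (ht : 0 < t) : sumTail μ 0 t = 0 := by
  simp [sumTail, ht.not_ge]

lemma sumTail_succ [SigmaFinite μ] (n : ℕ) (t : ℝ) :
    sumTail μ (n + 1) t = ∫⁻ x, sumTail μ n (t - x) ∂μ := by
  have hs : MeasurableSet {p : ℝ × (Fin n → ℝ) | t ≤ p.1 + ∑ i, p.2 i} :=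
    measurableSet_le measurable_const (by fun_prop)
  have hpreimage : (MeasurableEquiv.piFinSuccAbove (fun _ : Fin (n + 1) => ℝ) 0) ⁻¹'
      {p | t ≤ p.1 + ∑ i, p.2 i} = {x | t ≤ ∑ i, x i} := by
    ext x
    simp [Fin.sum_univ_succ, MeasurableEquiv.piFinSuccAbove, Fin.insertNthEquiv, Fin.tail]
  rw [sumTail, ← hpreimage,
    (measurePreserving_piFinSuccAbove (fun _ : Fin (n + 1) => μ) 0).measure_preimage
      hs.nullMeasurableSet, Measure.prod_apply hs]
  simp only [sumTail, sub_le_iff_le_add', preimage_ofPred_eq]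

lemma sumTail_of_nonpos [IsProbabilityMeasure μ] (hμ : ∀ᵐ x ∂μ, 0 ≤ x) (n : ℕ) {t : ℝ}
    (ht : t ≤ 0) : sumTail μ n t = 1 := by
  have hnonneg : ∀ᵐ x ∂(Measure.pi fun _ : Fin n => μ), ∀ i, 0 ≤ x i :=
    eventually_all.2 fun _ => Measure.tendsto_eval_ae_ae.eventually hμ
  have hae : {x : Fin n → ℝ | t ≤ ∑ i, x i} =ᵐ[Measure.pi fun _ : Fin n => μ] univ :=
    eventuallyEq_univ.2 (hnonneg.mono fun _ hx => ht.trans (Finset.sum_nonneg fun i _ => hx i))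
  rw [sumTail, measure_congr hae, measure_univ]

lemma pi_setOf_le_inv_mul_sum_eq_sumTail (μ : Measure ℝ) {n : ℕ} (hn : n ≠ 0) (b : ℝ) :
    (Measure.pi fun _ : Fin n => μ) {x | b ≤ (n : ℝ)⁻¹ * ∑ i, x i} = sumTail μ n (n * b) := by
  simp only [sumTail, le_inv_mul_iff₀ (Nat.cast_pos.2 (Nat.pos_of_ne_zero hn) : (0 : ℝ) < n)]

end SumTail

section ExponentialLaw

variable {r t : ℝ}

lemma lintegral_expMeasure (r : ℝ) {f : ℝ → ℝ≥0∞} (hf : Measurable f) :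
    ∫⁻ x, f x ∂expMeasure r =
      ∫⁻ x in Ici 0, ENNReal.ofReal (r * Real.exp (-(r * x))) * f x := by
  have hpdf : Measurable (exponentialPDF r) := (measurable_exponentialPDFReal r).ennreal_ofReal
  calc ∫⁻ x, f x ∂expMeasure r
      = ∫⁻ x, exponentialPDF r x * f x := lintegral_withDensity_eq_lintegral_mul _ hpdf hf
    _ = ∫⁻ x, (Ici 0).indicator
          (fun x => ENNReal.ofReal (r * Real.exp (-(r * x))) * f x) x := by
        refine lintegral_congr fun x => ?_
        by_cases hx : 0 ≤ x <;> simp [exponentialPDF_eq, hx]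
    _ = _ := lintegral_indicator measurableSet_Ici _

lemma ae_nonneg_expMeasure (r : ℝ) : ∀ᵐ x ∂expMeasure r, 0 ≤ x := by
  have hnull : expMeasure r (Iio 0) = 0 :=
    (withDensity_apply _ measurableSet_Iio).trans (lintegral_exponentialPDF_of_nonpos le_rfl)
  exact ae_iff.2 (by simpa only [not_le] using! hnull)

lemma setLIntegral_Ici_exponential (hr : 0 < r) (t : ℝ) :
    ∫⁻ x in Ici t, ENNReal.ofReal (r * Real.exp (-(r * x))) =
      ENNReal.ofReal (Real.exp (-(r * t))) := by
  have hint : IntegrableOn (fun x => r * Real.exp (-(r * x))) (Ici t) := by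
    rw [integrableOn_Ici_iff_integrableOn_Ioi]
    simpa only [neg_mul] using! (exp_neg_integrableOn_Ioi t hr).const_mul r
  rw [← ofReal_integral_eq_lintegral_ofReal hint (ae_of_all _ fun x => by positivity),
    integral_Ici_eq_integral_Ioi, integral_const_mul]
  simp only [← neg_mul]
  rw [integral_exp_mul_Ioi (neg_neg_of_pos hr)]
  field_simp

lemma integral_sum_range_pow_div_factorial (n : ℕ) (r t : ℝ) :
    ∫ x in (0 : ℝ)..t, r * ∑ k ∈ Finset.range n, (r * (t - x)) ^ k / k.factorial =
      ∑ k ∈ Finset.range n, (r * t) ^ (k + 1) / (k + 1).factorial := by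
  have hterm (k : ℕ) : ∫ x in (0 : ℝ)..t, r * ((r * (t - x)) ^ k / k.factorial) =
      (r * t) ^ (k + 1) / (k + 1).factorial := by
    simp only [mul_pow, mul_div_assoc]
    rw [intervalIntegral.integral_const_mul, intervalIntegral.integral_const_mul,
      intervalIntegral.integral_div, intervalIntegral.integral_comp_sub_left (fun x => x ^ k),
      sub_self, sub_zero, integral_pow, Nat.factorial_succ]
    push_cast
    simp only [zero_pow k.succ_ne_zero, sub_zero]
    field_simp
    ring
  simp only [Finset.mul_sum, ← hterm]
  exact intervalIntegral.integral_finsetSum fun k _ =>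
    Continuous.intervalIntegrable (by fun_prop) _ _

lemma setLIntegral_Ico_exponential_mul_erlang (hr : 0 ≤ r) (ht : 0 ≤ t) (n : ℕ) :
    ∫⁻ x in Ico 0 t, ENNReal.ofReal (r * Real.exp (-(r * x))) * ENNReal.ofReal
        (Real.exp (-(r * (t - x))) * ∑ k ∈ Finset.range n, (r * (t - x)) ^ k / k.factorial) =
      ENNReal.ofReal (Real.exp (-(r * t)) *
        ∑ k ∈ Finset.range n, (r * t) ^ (k + 1) / (k + 1).factorial) := by
  have hnonneg {x : ℝ} (hx : x ∈ Ico 0 t) : 0 ≤ r * (t - x) :=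
    mul_nonneg hr (sub_nonneg.2 hx.2.le)
  calc ∫⁻ x in Ico 0 t, ENNReal.ofReal (r * Real.exp (-(r * x))) * ENNReal.ofReal
        (Real.exp (-(r * (t - x))) * ∑ k ∈ Finset.range n, (r * (t - x)) ^ k / k.factorial)
      = ∫⁻ x in Ico 0 t, ENNReal.ofReal (Real.exp (-(r * t)) *
          (r * ∑ k ∈ Finset.range n, (r * (t - x)) ^ k / k.factorial)) := by
        refine setLIntegral_congr_fun measurableSet_Ico fun x _ => ?_
        have hexp : Real.exp (-(r * t)) = Real.exp (-(r * x)) * Real.exp (-(r * (t - x))) := by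
          rw [← Real.exp_add]
          ring_nf
        simp only [← ENNReal.ofReal_mul (by positivity : 0 ≤ r * Real.exp (-(r * x))), hexp]
        ring_nf
    _ = ENNReal.ofReal (∫ x in Ico 0 t, Real.exp (-(r * t)) *
          (r * ∑ k ∈ Finset.range n, (r * (t - x)) ^ k / k.factorial)) := by
        refine (ofReal_integral_eq_lintegral_ofReal ?_ ?_).symm
        · exact (Continuous.integrableOn_Icc (by fun_prop)).mono_set Ico_subset_Icc_self
        · refine ae_restrict_of_forall_mem measurableSet_Ico fun x hx => ?_
          have := hnonneg hx
          simp only [Pi.zero_apply]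
          positivity
    _ = _ := by
        rw [integral_Ico_eq_integral_Ioc, ← intervalIntegral.integral_of_le ht,
          intervalIntegral.integral_const_mul, integral_sum_range_pow_div_factorial]

theorem sumTail_expMeasure (hr : 0 < r) (n : ℕ) (ht : 0 < t) :
    sumTail (expMeasure r) n t =
      ENNReal.ofReal (Real.exp (-(r * t)) * ∑ k ∈ Finset.range n, (r * t) ^ k / k.factorial) := by
  have := isProbabilityMeasure_expMeasure hr
  induction n generalizing t with
  | zero => simp [sumTail_zero_of_pos ht]
  | succ n ih =>
    have hmeas : Measurable fun x => sumTail (expMeasure r) n (t - x) :=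
      (sumTail_antitone _ n).measurable.comp (measurable_const.sub measurable_id)
    have hlate : ∫⁻ x in Ici t, ENNReal.ofReal (r * Real.exp (-(r * x))) *
        sumTail (expMeasure r) n (t - x) = ENNReal.ofReal (Real.exp (-(r * t))) := by
      rw [← setLIntegral_Ici_exponential hr]
      refine setLIntegral_congr_fun measurableSet_Ici fun x hx => ?_
      simp only [sumTail_of_nonpos (ae_nonneg_expMeasure r) n (sub_nonpos.2 hx), mul_one]
    have hearly : ∫⁻ x in Ico 0 t, ENNReal.ofReal (r * Real.exp (-(r * x))) *
        sumTail (expMeasure r) n (t - x) = ENNReal.ofReal (Real.exp (-(r * t)) *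
          ∑ k ∈ Finset.range n, (r * t) ^ (k + 1) / (k + 1).factorial) := by
      rw [← setLIntegral_Ico_exponential_mul_erlang hr.le ht.le]
      refine setLIntegral_congr_fun measurableSet_Ico fun x hx => ?_
      simp only [ih (sub_pos.2 hx.2)]
    have hdisj : Disjoint (Ico 0 t) (Ici t) :=
      (Iio_disjoint_Ici le_rfl).mono_left Ico_subset_Iio_self
    rw [sumTail_succ, lintegral_expMeasure r hmeas, ← Ico_union_Ici_eq_Ici ht.le,
      lintegral_union measurableSet_Ici hdisj, hearly, hlate,
      ← ENNReal.ofReal_add (by positivity) (by positivity), Finset.sum_range_succ']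
    simp [mul_add]

end ExponentialLaw

section PartialExponentialSum

variable {c : ℝ}

lemma tendsto_inv_mul_log_natCast :
    Tendsto (fun n : ℕ => (n : ℝ)⁻¹ * Real.log n) atTop (𝓝 0) :=
  (Real.isLittleO_log_id_atTop.tendsto_div_nhds_zero.comp
    (tendsto_natCast_atTop_atTop (R := ℝ))).congr fun _ => div_eq_inv_mul _ _

lemma tendsto_log_sub_inv_mul_log_factorial :
    Tendsto (fun n : ℕ => Real.log n - (n : ℝ)⁻¹ * Real.log n.factorial) atTop (𝓝 1) := by
  have hinv : Tendsto (fun n : ℕ => (n : ℝ)⁻¹) atTop (𝓝 0) := tendsto_inv_atTop_nhds_zero_nat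
  have hstirling : Tendsto (fun n : ℕ => Real.log (Stirling.stirlingSeq n)) atTop
      (𝓝 (Real.log (√Real.pi))) :=
    Stirling.tendsto_stirlingSeq_sqrt_pi.log (by positivity)
  have hlim : Tendsto (fun n : ℕ => 1 - (n : ℝ)⁻¹ * Real.log (Stirling.stirlingSeq n) -
      ((n : ℝ)⁻¹ * Real.log 2 + (n : ℝ)⁻¹ * Real.log n) / 2) atTop (𝓝 1) := by
    simpa using ((hinv.mul hstirling).const_sub 1).sub
      (((hinv.mul_const (Real.log 2)).add tendsto_inv_mul_log_natCast).div_const 2)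
  refine hlim.congr' ?_
  filter_upwards [eventually_ne_atTop 0] with n hn
  have hn' : (n : ℝ) ≠ 0 := Nat.cast_ne_zero.2 hn
  rw [Stirling.log_stirlingSeq_formula, Real.log_div hn' (Real.exp_pos 1).ne', Real.log_exp,
    Real.log_mul two_ne_zero hn']
  field_simp
  ring

lemma sum_range_mul_pow_div_factorial_le (hc : 1 ≤ c) {x : ℝ} (hx : 0 ≤ x) (n : ℕ) :
    ∑ k ∈ Finset.range n, (x * c) ^ k / k.factorial ≤ c ^ n * Real.exp x := by
  calc ∑ k ∈ Finset.range n, (x * c) ^ k / k.factorial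
      ≤ ∑ k ∈ Finset.range n, c ^ n * (x ^ k / k.factorial) := by
        refine Finset.sum_le_sum fun k hk => ?_
        rw [mul_pow, mul_comm, mul_div_assoc]
        gcongr
        exact (Finset.mem_range.1 hk).le
    _ = c ^ n * ∑ k ∈ Finset.range n, x ^ k / k.factorial := (Finset.mul_sum ..).symm
    _ ≤ c ^ n * Real.exp x := by
        gcongr
        exact Real.sum_le_exp_of_nonneg hx n

lemma pow_div_factorial_mul_le_sum_range (hc : 0 < c) {n : ℕ} (hn : n ≠ 0) :
    (n * c) ^ n / (n.factorial * c) ≤ ∑ k ∈ Finset.range n, (n * c) ^ k / k.factorial := by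
  obtain ⟨m, rfl⟩ := Nat.exists_eq_succ_of_ne_zero hn
  calc ((m + 1 : ℕ) * c) ^ (m + 1) / ((m + 1).factorial * c)
      = ((m + 1 : ℕ) * c) ^ m / m.factorial := by
        rw [Nat.factorial_succ]
        push_cast
        field_simp
        ring
    _ ≤ _ := Finset.single_le_sum (f := fun k => ((m + 1 : ℕ) * c) ^ k / (k.factorial : ℝ))
        (fun k _ => by positivity) (Finset.self_mem_range_succ m)

theorem tendsto_inv_mul_log_sum_range_pow_div_factorial (hc : 1 ≤ c) :
    Tendsto (fun n : ℕ =>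
        (n : ℝ)⁻¹ * Real.log (∑ k ∈ Finset.range n, (n * c) ^ k / k.factorial))
      atTop (𝓝 (1 + Real.log c)) := by
  have hc0 : 0 < c := one_pos.trans_le hc
  have hlower : Tendsto (fun n : ℕ => Real.log n - (n : ℝ)⁻¹ * Real.log n.factorial +
      (Real.log c - (n : ℝ)⁻¹ * Real.log c)) atTop (𝓝 (1 + Real.log c)) := by
    simpa using tendsto_log_sub_inv_mul_log_factorial.add
      ((tendsto_inv_atTop_nhds_zero_nat.mul_const (Real.log c)).const_sub (Real.log c))
  refine tendsto_of_tendsto_of_tendsto_of_le_of_le' hlower tendsto_const_nhds ?_ ?_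
  · filter_upwards [eventually_ne_atTop 0] with n hn
    calc Real.log n - (n : ℝ)⁻¹ * Real.log n.factorial + (Real.log c - (n : ℝ)⁻¹ * Real.log c)
        = (n : ℝ)⁻¹ * Real.log ((n * c) ^ n / (n.factorial * c)) := by
          rw [Real.log_div (by positivity) (by positivity), Real.log_pow,
            Real.log_mul (by positivity) hc0.ne', Real.log_mul (by positivity) hc0.ne']
          field_simp
          ring
      _ ≤ _ := by
          gcongr
          exact pow_div_factorial_mul_le_sum_range hc0 hn
  · filter_upwards [eventually_ne_atTop 0] with n hn
    calc (n : ℝ)⁻¹ * Real.log (∑ k ∈ Finset.range n, (n * c) ^ k / k.factorial)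
        ≤ (n : ℝ)⁻¹ * Real.log (c ^ n * Real.exp n) := by
          gcongr
          exact sum_range_mul_pow_div_factorial_le hc n.cast_nonneg n
      _ = 1 + Real.log c := by
          rw [Real.log_mul (by positivity) (by positivity), Real.log_pow, Real.log_exp]
          field_simp
          ring

end PartialExponentialSum

lemma expRate_ofReal (n : ℕ) {x : ℝ} (hx : 0 < x) :
    expRate n (ENNReal.ofReal x) = (((n : ℝ)⁻¹ * Real.log x : ℝ) : EReal) := by
  rw [expRate, ENNReal.log_ofReal_of_pos hx, EReal.coe_mul]

lemma expRate_sumTail_expMeasure {r b : ℝ} (hr : 0 < r) (hb : 0 < b) {n : ℕ} (hn : n ≠ 0) :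
    expRate n (sumTail (expMeasure r) n (n * b)) =
      (((n : ℝ)⁻¹ * Real.log (∑ k ∈ Finset.range n, (n * (r * b)) ^ k / k.factorial) -
        r * b : ℝ) : EReal) := by
  rw [sumTail_expMeasure hr n (by positivity), mul_left_comm r, expRate_ofReal n (by positivity),
    Real.log_mul (by positivity) (by positivity), Real.log_exp]
  congr 1
  field_simp
  ring

theorem exponential_cramer_general {r b : ℝ} (hr : 0 < r) (hb : 1 ≤ r * b) :
    Tendsto (fun n : ℕ => -expRate n
        ((Measure.pi fun _ : Fin n => expMeasure r)
          {x : Fin n → ℝ | b ≤ (n : ℝ)⁻¹ * ∑ i, x i})) atTop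
      (𝓝 ((r * b - 1 - Real.log (r * b) : ℝ) : EReal)) := by
  have hb0 : 0 < b := pos_of_mul_pos_right (one_pos.trans_le hb) hr.le
  have hlim := ((tendsto_inv_mul_log_sum_range_pow_div_factorial hb).sub_const (r * b)).neg
  rw [show -(1 + Real.log (r * b) - r * b) = r * b - 1 - Real.log (r * b) by ring] at hlim
  refine (EReal.tendsto_coe.2 hlim).congr' ?_
  filter_upwards [eventually_ne_atTop 0] with n hn
  rw [pi_setOf_le_inv_mul_sum_eq_sumTail _ hn, expRate_sumTail_expMeasure hr hb0 hn, EReal.coe_neg]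

/-- Cramér's theorem for the exponential distribution: for i.i.d. `Exp(1)` random variables
and `b > 1`, `-(1/n) log P(M_n ≥ b) → b - 1 - log b`. -/
theorem exponential_cramer (b : ℝ) (hb : 1 < b) :
    Tendsto (fun n : ℕ => -expRate n
        ((Measure.pi fun _ : Fin n => expMeasure 1)
          {x : Fin n → ℝ | b ≤ (n : ℝ)⁻¹ * ∑ i, x i})) atTop
      (𝓝 ((b - 1 - Real.log b : ℝ) : EReal)) := by
  simpa only [one_mul] using exponential_cramer_general one_pos (by simpa using hb.le)
end

section
/- Let b > 1 and define I : ℝ → [0,∞] by I(w) = (w − 1/2)²/2 if w ≥ 1/2 or w ≤ −b − 1/2, and I(w) = +∞ otherwise. Then I(1/2) = 0, and −2 belongs to the subdifferential ∂I(1/2) if and only if b ≥ 3; moreover, the infimum of the slopes of supporting lines of I at the point w = 1/2 is −(b+1)/2, attained by the line through the points (−b − 1/2, I(−b − 1/2)) and (1/2, 0). -/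
open MeasureTheory Filter Set Topology
open scoped ENNReal NNReal

/-!
The chord of the parabola `(w - a)² / 2` from its vertex `a` to `y` has slope `(y - a) / 2`. A line
through the vertex supports the parabola restricted to `(-∞, c] ∪ [a, ∞)` iff its slope is at least
every chord slope on the left branch and at most every one on the right branch. The supremum on the
left is `(c - a) / 2`, approached as `y → c`, and the infimum on the right is `0`.
-/

/-- The parabola `(w - a)² / 2`, set to `∞` on the gap `(c, a)` to the left of its vertex `a`. The
conditional rate function `I_Q^B` of the Gaussian sample mean is the case `c = -b - 1/2`,
`a = 1/2`. -/
noncomputable def gappedParabola (c a w : ℝ) : ℝ≥0∞ :=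
  if a ≤ w ∨ w ≤ c then ENNReal.ofReal ((w - a) ^ 2 / 2) else ⊤

section GappedParabola

variable {a c k t w : ℝ}

theorem gappedParabola_vertex (c a : ℝ) : gappedParabola c a a = 0 := by
  simp [gappedParabola]

theorem coe_gappedParabola (hw : a ≤ w ∨ w ≤ c) :
    (gappedParabola c a w : EReal) = (((w - a) ^ 2 / 2 : ℝ) : EReal) := by
  rw [gappedParabola, if_pos hw, EReal.coe_ennreal_ofReal, max_eq_left (by positivity)]

theorem coe_gappedParabola_of_not (hw : ¬(a ≤ w ∨ w ≤ c)) :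
    (gappedParabola c a w : EReal) = ⊤ := by
  rw [gappedParabola, if_neg hw, EReal.coe_ennreal_top]

theorem coe_gappedParabola_eq_chord (c a : ℝ) :
    (gappedParabola c a c : EReal) = (((c - a) / 2 * (c - a) : ℝ) : EReal) := by
  rw [coe_gappedParabola (Or.inr le_rfl)]
  congr 1
  ring

theorem mem_subdiff_gappedParabola_iff :
    k ∈ Subdiff (fun w => (gappedParabola c a w : EReal)) a ↔
      ∀ y, a ≤ y ∨ y ≤ c → k * (y - a) ≤ (y - a) ^ 2 / 2 := by
  simp only [Subdiff, mem_ofPred_eq, gappedParabola_vertex, EReal.coe_ennreal_zero, zero_add]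
  refine forall_congr' fun y => ?_
  by_cases hy : a ≤ y ∨ y ≤ c
  · simp only [coe_gappedParabola hy, EReal.coe_le_coe_iff, hy, forall_const]
  · simp only [coe_gappedParabola_of_not hy, le_top, hy, false_imp_iff]

theorem mul_le_sq_div_two_iff_of_pos (ht : 0 < t) : k * t ≤ t ^ 2 / 2 ↔ k ≤ t / 2 := by
  rw [show t ^ 2 / 2 = t / 2 * t by ring, mul_le_mul_iff_left₀ ht]

theorem mul_le_sq_div_two_iff_of_neg (ht : t < 0) : k * t ≤ t ^ 2 / 2 ↔ t / 2 ≤ k := by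
  rw [show t ^ 2 / 2 = t / 2 * t by ring, mul_le_mul_right_of_neg ht]

theorem forall_ge_mul_le_sq_div_two_iff :
    (∀ y, a ≤ y → k * (y - a) ≤ (y - a) ^ 2 / 2) ↔ k ≤ 0 := by
  constructor
  · intro h
    refine le_of_forall_gt_imp_ge_of_dense fun s hs => ?_
    have hchord := h (a + 2 * s) (by linarith)
    rw [mul_le_sq_div_two_iff_of_pos (by linarith)] at hchord
    linarith
  · intro hk y hy
    calc k * (y - a) ≤ 0 := mul_nonpos_of_nonpos_of_nonneg hk (sub_nonneg.2 hy)
      _ ≤ (y - a) ^ 2 / 2 := by positivity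

theorem forall_le_mul_le_sq_div_two_iff (hca : c ≤ a) :
    (∀ y, y ≤ c → k * (y - a) ≤ (y - a) ^ 2 / 2) ↔ (c - a) / 2 ≤ k := by
  constructor
  · intro h
    -- Approaching `c` from the left covers `c = a`, where the chord to `c` itself degenerates.
    refine le_of_forall_lt_imp_le_of_dense fun s hs => ?_
    have hchord := h (a + 2 * s) (by linarith)
    rw [mul_le_sq_div_two_iff_of_neg (by linarith)] at hchord
    linarith
  · intro hk y hy
    rcases (hy.trans hca).eq_or_lt with rfl | hya
    · simp
    · exact (mul_le_sq_div_two_iff_of_neg (sub_neg.2 hya)).2 (by linarith)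

theorem subdiff_gappedParabola (hca : c ≤ a) :
    Subdiff (fun w => (gappedParabola c a w : EReal)) a = Icc ((c - a) / 2) 0 := by
  ext k
  rw [mem_subdiff_gappedParabola_iff, mem_Icc, ← forall_le_mul_le_sq_div_two_iff hca,
    ← forall_ge_mul_le_sq_div_two_iff (a := a), and_comm, ← forall_and]
  simp only [or_imp]

end GappedParabola

theorem nonconvex_gaussian_rate_general {b : ℝ} (hb : -1 ≤ b) {I : ℝ → ℝ≥0∞}
    (hI : ∀ w : ℝ, I w =
      if 1 / 2 ≤ w ∨ w ≤ -b - 1 / 2 then ENNReal.ofReal ((w - 1 / 2) ^ 2 / 2) else ⊤) :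
    I (1 / 2) = 0 ∧
    Subdiff (fun w : ℝ => (I w : EReal)) (1 / 2) = Icc (-(b + 1) / 2) 0 ∧
    (I (-b - 1 / 2) : EReal) = (((-(b + 1) / 2) * ((-b - 1 / 2) - 1 / 2) : ℝ) : EReal) := by
  obtain rfl : I = gappedParabola (-b - 1 / 2) (1 / 2) := funext hI
  rw [show -(b + 1) / 2 = (-b - 1 / 2 - 1 / 2) / 2 by ring]
  exact ⟨gappedParabola_vertex _ _, subdiff_gappedParabola (by linarith),
    coe_gappedParabola_eq_chord _ _⟩

/-- The conditional rate function `I_Q^B` for the Gaussian sample mean with the nonconvex set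
`B = (-∞, -b] ∪ [1, ∞)`: `I(1/2) = 0`; `-2 ∈ ∂I(1/2)` iff `b ≥ 3`; and the least slope of a
supporting line of `I` at `1/2` is `-(b+1)/2`, attained by the line through the points
`(-b - 1/2, I(-b - 1/2))` and `(1/2, 0)`. -/
theorem nonconvex_gaussian_rate (b : ℝ) (hb : 1 < b)
    (I : ℝ → ℝ≥0∞)
    (hI : ∀ w : ℝ, I w =
      if 1 / 2 ≤ w ∨ w ≤ -b - 1 / 2 then ENNReal.ofReal ((w - 1 / 2) ^ 2 / 2) else ⊤) :
    I (1 / 2) = 0 ∧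
    ((-2 : ℝ) ∈ Subdiff (fun w : ℝ => (I w : EReal)) (1 / 2) ↔ 3 ≤ b) ∧
    IsLeast (Subdiff (fun w : ℝ => (I w : EReal)) (1 / 2)) (-(b + 1) / 2) ∧
    (I (-b - 1 / 2) : EReal) = (((-(b + 1) / 2) * ((-b - 1 / 2) - 1 / 2) : ℝ) : EReal) := by
  obtain ⟨hvertex, hsubdiff, hchord⟩ := nonconvex_gaussian_rate_general (by linarith) hI
  exact ⟨hvertex, by rw [hsubdiff, mem_Icc]; grind,
    hsubdiff ▸ isLeast_Icc (by linarith), hchord⟩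
end
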